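/- Let M ∈ ℝ^{m×n} be entrywise nonnegative such that the vertices of conv(θ(M)) are non-repeated. Then for any 0 ≤ α ≤ β ≤ 1, conv(θ(M)) ⊆ conv(θ(P^α(M))) ⊆ conv(θ(P^β(M))) ⊆ Δ^m ∩ col(θ(M)), where col(θ(M)) is the linear span of the columns of θ(M); consequently rank₊(M) ≤ rank₊(P^α(M)) ≤ rank₊(P^β(M)). -/

import Mathlib

open Matrix BigOperators

/-- The column `j` of `M` normalized to unit ℓ₁-norm. -/
noncomputable def normCol {m n : ℕ} (M : Matrix (Fin m) (Fin n) ℝ) (j : Fin n) : Fin m → ℝ :=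
  (∑ i, |M i j|)⁻¹ • fun i => M i j

/-- Column `j` of `M` is nonzero. -/
def colNZ {m n : ℕ} (M : Matrix (Fin m) (Fin n) ℝ) (j : Fin n) : Prop :=
  (fun i => M i j) ≠ 0

/-- `θ(M)`: the set of ℓ₁-normalized nonzero columns of `M`. -/
noncomputable def thetaCols {m n : ℕ} (M : Matrix (Fin m) (Fin n) ℝ) : Set (Fin m → ℝ) :=
  {x | ∃ j, colNZ M j ∧ x = normCol M j}

/-- The nonnegative rank of `M`. -/
noncomputable def nnRank {m n : ℕ} (M : Matrix (Fin m) (Fin n) ℝ) : ℕ :=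
  sInf {r : ℕ | ∃ U : Matrix (Fin m) (Fin r) ℝ, ∃ V : Matrix (Fin r) (Fin n) ℝ,
    (∀ i j, 0 ≤ U i j) ∧ (∀ i j, 0 ≤ V i j) ∧ M = U * V}

/-- The squared Frobenius norm. -/
noncomputable def frobSq {m n : ℕ} (A : Matrix (Fin m) (Fin n) ℝ) : ℝ :=
  ∑ i, ∑ j, (A i j) ^ 2

/-- Feasibility for problem (tigrel): `B ≥ 0`, zero diagonal, `MB ≤ M` entrywise. -/
def TigrelFeasible {m n : ℕ} (M : Matrix (Fin m) (Fin n) ℝ)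
    (B : Matrix (Fin n) (Fin n) ℝ) : Prop :=
  (∀ i j, 0 ≤ B i j) ∧ (∀ i, B i i = 0) ∧ ∀ i j, (M * B) i j ≤ M i j

/-- Optimality for problem (tigrel): feasible and minimizes `‖M - MB‖_F²`. -/
def TigrelOpt {m n : ℕ} (M : Matrix (Fin m) (Fin n) ℝ)
    (B : Matrix (Fin n) (Fin n) ℝ) : Prop :=
  TigrelFeasible M B ∧
    ∀ B', TigrelFeasible M B' → frobSq (M - M * B) ≤ frobSq (M - M * B')

/-- A monomial matrix: permutation of a diagonal matrix with positive diagonal. -/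
def IsMonomial {k : ℕ} (P : Matrix (Fin k) (Fin k) ℝ) : Prop :=
  ∃ (σ : Equiv.Perm (Fin k)) (d : Fin k → ℝ), (∀ i, 0 < d i) ∧
    ∀ i j, P i j = if i = σ j then d j else 0

/-- Every extreme point of `conv(θ(M))` equals `θ(M_{:j})` for exactly one column `j`. -/
def NonRepeatedVertices {m n : ℕ} (M : Matrix (Fin m) (Fin n) ℝ) : Prop :=
  ∀ x ∈ Set.extremePoints ℝ (convexHull ℝ (thetaCols M)),
    ∃! j : Fin n, colNZ M j ∧ x = normCol M j

/-- Uniqueness of size-`r` exact NMF up to permutation and scaling. -/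
def UniqueNMF {m n : ℕ} (r : ℕ) (M : Matrix (Fin m) (Fin n) ℝ) : Prop :=
  ∀ (U₁ U₂ : Matrix (Fin m) (Fin r) ℝ) (V₁ V₂ : Matrix (Fin r) (Fin n) ℝ),
    (∀ i j, 0 ≤ U₁ i j) → (∀ i j, 0 ≤ V₁ i j) →
    (∀ i j, 0 ≤ U₂ i j) → (∀ i j, 0 ≤ V₂ i j) →
    M = U₁ * V₁ → M = U₂ * V₂ →
    ∃ P : Matrix (Fin r) (Fin r) ℝ, IsMonomial P ∧ U₂ = U₁ * P ∧ V₂ = P⁻¹ * V₁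

/-- Separability of a factorization, expressed as a property of the right factor `V`. -/
def SeparableFactor {r n : ℕ} (V : Matrix (Fin r) (Fin n) ℝ) : Prop :=
  ∀ i : Fin r, ∃ j : Fin n, V i j ≠ 0 ∧ ∀ i' : Fin r, i' ≠ i → V i' j = 0

/-- The Frobenius norm. -/
noncomputable def frobNorm {m n : ℕ} (A : Matrix (Fin m) (Fin n) ℝ) : ℝ :=
  Real.sqrt (∑ i, ∑ j, (A i j) ^ 2)

/-- The Euclidean (ℓ₂) norm of a vector. -/
noncomputable def vecNorm2 {n : ℕ} (x : Fin n → ℝ) : ℝ :=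
  Real.sqrt (∑ i, (x i) ^ 2)

/-- The spectral (operator 2-) norm of a matrix. -/
noncomputable def specNorm {m n : ℕ} (A : Matrix (Fin m) (Fin n) ℝ) : ℝ :=
  sSup {c : ℝ | ∃ x : Fin n → ℝ, vecNorm2 x ≤ 1 ∧ c = vecNorm2 (A.mulVec x)}

theorem colNZ_iff {m n : ℕ} (M : Matrix (Fin m) (Fin n) ℝ) (hM : ∀ i j, 0 ≤ M i j) (j : Fin n) :
    colNZ M j ↔ 0 < ∑ i, M i j := by
  have hs : 0 ≤ ∑ i, M i j := Finset.sum_nonneg fun i _ => hM i j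
  rw [lt_iff_le_and_ne, colNZ]
  refine ⟨fun h => ⟨hs, fun h0 => h ?_⟩, fun h h0 => h.2 ?_⟩
  · have := (Finset.sum_eq_zero_iff_of_nonneg (fun i _ => hM i j)).1 h0.symm
    funext i
    exact this i (Finset.mem_univ i)
  · symm
    apply Finset.sum_eq_zero
    intro i _
    exact congrFun h0 i

theorem normCol_eq {m n : ℕ} (M : Matrix (Fin m) (Fin n) ℝ) (hM : ∀ i j, 0 ≤ M i j) (j : Fin n) :
    normCol M j = (∑ i, M i j)⁻¹ • fun i => M i j := by
  simp only [normCol, abs_of_nonneg (hM _ j)]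

theorem col_eq_smul {m n : ℕ} (M : Matrix (Fin m) (Fin n) ℝ) (hM : ∀ i j, 0 ≤ M i j) (j : Fin n)
    (hj : colNZ M j) : (fun i => M i j) = (∑ i, M i j) • normCol M j := by
  rw [normCol_eq M hM, smul_smul, mul_inv_cancel₀ ((colNZ_iff M hM j).1 hj).ne', one_smul]

theorem normCol_mem_simplex {m n : ℕ} (M : Matrix (Fin m) (Fin n) ℝ) (hM : ∀ i j, 0 ≤ M i j)
    (j : Fin n) (hj : colNZ M j) : normCol M j ∈ stdSimplex ℝ (Fin m) := by
  have hp := (colNZ_iff M hM j).1 hj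
  rw [normCol_eq M hM]
  refine ⟨fun i => ?_, ?_⟩
  · simp only [Pi.smul_apply, smul_eq_mul]
    exact mul_nonneg (inv_nonneg.2 hp.le) (hM i j)
  · simp only [Pi.smul_apply, smul_eq_mul]
    rw [← Finset.mul_sum, inv_mul_cancel₀ hp.ne']

theorem normalize_mem {m n : ℕ} (Y : Matrix (Fin m) (Fin n) ℝ) (hY : ∀ i j, 0 ≤ Y i j)
    (x : Fin m → ℝ) (hx : 0 < ∑ i, x i) (w : Fin n → ℝ) (hw : ∀ k, 0 ≤ w k)
    (hxw : x = Y *ᵥ w) (C : Set (Fin m → ℝ)) (hC : Convex ℝ C)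
    (hin : ∀ k, w k ≠ 0 → colNZ Y k → normCol Y k ∈ C) : (∑ i, x i)⁻¹ • x ∈ C := by
  classical
  set s : Fin n → ℝ := fun k => ∑ i, Y i k with hs
  have hs0 : ∀ k, 0 ≤ s k := fun k => Finset.sum_nonneg fun i _ => hY i k
  set T := ∑ i, x i with hT
  have hsum : T = ∑ k, w k * s k := by
    rw [hT, hxw]
    simp only [Matrix.mulVec, dotProduct, hs, Finset.mul_sum]
    rw [Finset.sum_comm]
    exact Finset.sum_congr rfl fun k _ => Finset.sum_congr rfl fun i _ => mul_comm _ _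
  have hzero : ∀ k, s k = 0 → ∀ i, Y i k = 0 := by
    intro k hk i
    exact (Finset.sum_eq_zero_iff_of_nonneg (fun i _ => hY i k)).1 hk i (Finset.mem_univ i)
  have hxs : T⁻¹ • x = ∑ k ∈ Finset.univ.filter (fun k => w k * s k ≠ 0),
      (T⁻¹ * (w k * s k)) • normCol Y k := by
    rw [Finset.sum_filter_of_ne]
    · funext i
      rw [Finset.sum_apply, hxw]
      simp only [Pi.smul_apply, smul_eq_mul, Matrix.mulVec, dotProduct, Finset.mul_sum,
        normCol_eq Y hY]
      refine Finset.sum_congr rfl fun k _ => ?_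
      change T⁻¹ * (Y i k * w k) = T⁻¹ * (w k * s k) * ((s k)⁻¹ * Y i k)
      by_cases hk : s k = 0
      · simp [hzero k hk]
      · field_simp
    · intro k _ h h0
      exact h (by rw [h0]; simp)
  rw [hxs]
  refine hC.sum_mem ?_ ?_ ?_
  · intro k _
    exact mul_nonneg (inv_nonneg.2 hx.le) (mul_nonneg (hw k) (hs0 k))
  · rw [← Finset.mul_sum, Finset.sum_filter_ne_zero, ← hsum, inv_mul_cancel₀ hx.ne']
  · intro k hk
    have hk' := (Finset.mem_filter.1 hk).2
    refine hin k (left_ne_zero_of_mul hk') ((colNZ_iff Y hY k).2 ?_)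
    exact lt_of_le_of_ne (hs0 k) (right_ne_zero_of_mul hk').symm

theorem dom_hull {m n : ℕ} (X Y : Matrix (Fin m) (Fin n) ℝ) (hX : ∀ i j, 0 ≤ X i j)
    (hY : ∀ i j, 0 ≤ Y i j) (W : Matrix (Fin n) (Fin n) ℝ) (hW : ∀ i j, 0 ≤ W i j)
    (h : X = Y * W) : convexHull ℝ (thetaCols X) ⊆ convexHull ℝ (thetaCols Y) := by
  refine convexHull_min ?_ (convex_convexHull ℝ _)
  rintro x ⟨j, hj, rfl⟩
  rw [normCol_eq X hX]
  refine normalize_mem Y hY (fun i => X i j) ((colNZ_iff X hX j).1 hj) (fun k => W k j)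
    (fun k => hW k j) ?_ _ (convex_convexHull ℝ _) ?_
  · funext i
    rw [h]; rfl
  · intro k _ hk
    exact subset_convexHull ℝ _ ⟨k, hk, rfl⟩

theorem hull_dom {m n : ℕ} (X Y : Matrix (Fin m) (Fin n) ℝ) (hX : ∀ i j, 0 ≤ X i j)
    (hY : ∀ i j, 0 ≤ Y i j) (h : thetaCols X ⊆ convexHull ℝ (thetaCols Y)) :
    ∃ W : Matrix (Fin n) (Fin n) ℝ, (∀ i j, 0 ≤ W i j) ∧ X = Y * W := by
  classical
  have key : convexHull ℝ (thetaCols Y) ⊆ {y | ∃ w : Fin n → ℝ, (∀ k, 0 ≤ w k) ∧ y = Y *ᵥ w} := by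
    refine convexHull_min ?_ ?_
    · rintro x ⟨j, hj, rfl⟩
      refine ⟨Pi.single j (∑ i, Y i j)⁻¹, ?_, ?_⟩
      · intro k
        by_cases hk : k = j
        · subst hk
          simpa using Finset.sum_nonneg fun i _ => hY i k
        · simp [hk]
      · rw [normCol_eq Y hY]
        funext i
        simp [mul_comm]
    · rintro x ⟨w, hw, rfl⟩ y ⟨v, hv, rfl⟩ a b ha hb _
      refine ⟨a • w + b • v, ?_, ?_⟩
      · intro k
        exact add_nonneg (mul_nonneg ha (hw k)) (mul_nonneg hb (hv k))
      · rw [Matrix.mulVec_add, Matrix.mulVec_smul, Matrix.mulVec_smul]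
  have : ∀ j, ∃ w : Fin n → ℝ, (∀ k, 0 ≤ w k) ∧ (fun i => X i j) = Y *ᵥ w := by
    intro j
    by_cases hj : colNZ X j
    · obtain ⟨w, hw, h2⟩ := key (h ⟨j, hj, rfl⟩)
      refine ⟨(∑ i, X i j) • w, ?_, ?_⟩
      · intro k
        exact mul_nonneg (Finset.sum_nonneg fun i _ => hX i j) (hw k)
      · rw [Matrix.mulVec_smul, ← h2, ← col_eq_smul X hX j hj]
    · refine ⟨0, fun k => le_rfl, ?_⟩
      rw [Matrix.mulVec_zero]
      by_contra h0
      exact hj h0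
  choose w hw h2 using this
  refine ⟨fun k j => w j k, fun k j => hw j k, ?_⟩
  ext i j
  exact congrFun (h2 j) i

theorem dom_rank {m n : ℕ} (X Y : Matrix (Fin m) (Fin n) ℝ)
    (hY : ∀ i j, 0 ≤ Y i j) (W : Matrix (Fin n) (Fin n) ℝ) (hW : ∀ i j, 0 ≤ W i j)
    (h : X = Y * W) : nnRank X ≤ nnRank Y := by
  have hne : {r : ℕ | ∃ U : Matrix (Fin m) (Fin r) ℝ, ∃ V : Matrix (Fin r) (Fin n) ℝ,
    (∀ i j, 0 ≤ U i j) ∧ (∀ i j, 0 ≤ V i j) ∧ Y = U * V}.Nonempty := by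
    refine ⟨m, 1, Y, ?_, hY, (Matrix.one_mul Y).symm⟩
    intro i j
    rw [Matrix.one_apply]
    split_ifs <;> norm_num
  have hmem := Nat.sInf_mem hne
  change nnRank Y ∈ _ at hmem
  generalize nnRank Y = r at hmem ⊢
  obtain ⟨U, V, hU, hV, h2⟩ := hmem
  refine Nat.sInf_le ⟨U, V * W, hU, ?_, ?_⟩
  · intro i j
    rw [Matrix.mul_apply]
    exact Finset.sum_nonneg fun k _ => mul_nonneg (hV i k) (hW k j)
  · rw [← Matrix.mul_assoc, ← h2, h]

theorem thetaCols_finite {m n : ℕ} (M : Matrix (Fin m) (Fin n) ℝ) : (thetaCols M).Finite := by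
  refine (Set.finite_range (normCol M)).subset ?_
  rintro x ⟨j, _, rfl⟩
  exact ⟨j, rfl⟩

theorem P_apply {m n : ℕ} (M : Matrix (Fin m) (Fin n) ℝ) (B : Matrix (Fin n) (Fin n) ℝ) (β : ℝ) :
    M * (1 - β • B) = M - β • (M * B) := by
  rw [Matrix.mul_sub, Matrix.mul_one, Matrix.mul_smul]

theorem P_nonneg {m n : ℕ} (M : Matrix (Fin m) (Fin n) ℝ) (hM : ∀ i j, 0 ≤ M i j)
    (B : Matrix (Fin n) (Fin n) ℝ) (hB : TigrelFeasible M B) (β : ℝ) (_hb : 0 ≤ β) (h1 : β ≤ 1) :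
    ∀ i j, 0 ≤ (M * (1 - β • B) : Matrix (Fin m) (Fin n) ℝ) i j := by
  intro i j
  rw [P_apply]
  simp only [Matrix.sub_apply, Matrix.smul_apply, smul_eq_mul]
  have h2 := hB.2.2 i j
  have h3 : 0 ≤ (M * B) i j := by
    rw [Matrix.mul_apply]
    exact Finset.sum_nonneg fun k _ => mul_nonneg (hM i k) (hB.1 k j)
  nlinarith

/-- A functional nonnegative on the columns of `P` is nonnegative on the columns of `M`. -/
theorem key_fun {m n : ℕ} (M : Matrix (Fin m) (Fin n) ℝ) (hM : ∀ i j, 0 ≤ M i j)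
    (hvert : NonRepeatedVertices M) (B : Matrix (Fin n) (Fin n) ℝ) (hB : TigrelFeasible M B)
    (β : ℝ) (hb : 0 ≤ β) (h1 : β ≤ 1) (g : (Fin m → ℝ) →L[ℝ] ℝ)
    (hg : ∀ j, 0 ≤ g (fun i => (M * (1 - β • B) : Matrix (Fin m) (Fin n) ℝ) i j)) (j₀ : Fin n) (hj₀ : colNZ M j₀) :
    0 ≤ g (normCol M j₀) := by
  by_contra hneg
  push Not at hneg
  set C := convexHull ℝ (thetaCols M) with hC
  have hCc : IsCompact C := (thetaCols_finite M).isCompact_convexHull (𝕜 := ℝ)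
  have hmemC : ∀ k, colNZ M k → normCol M k ∈ C := fun k hk => subset_convexHull ℝ _ ⟨k, hk, rfl⟩
  have hexp : IsExposed ℝ C ((-g).toExposed C) := ContinuousLinearMap.toExposed.isExposed
  obtain ⟨x₀, hx₀C, hx₀⟩ := hCc.exists_isMinOn ⟨_, hmemC j₀ hj₀⟩ g.continuous.continuousOn
  have hFne : ((-g).toExposed C).Nonempty := by
    refine ⟨x₀, hx₀C, fun y hy => ?_⟩
    simpa using hx₀ hy
  obtain ⟨e, he⟩ := (hexp.isCompact hCc).extremePoints_nonempty hFne
  have heC : e ∈ Set.extremePoints ℝ C := hexp.isExtreme.extremePoints_subset_extremePoints he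
  have hmin : ∀ y ∈ C, g e ≤ g y := by
    intro y hy
    have := he.1.2 y hy
    simpa using this
  obtain ⟨i, ⟨hi, hei⟩, huniq⟩ := hvert e heC
  set μ := g e with hμ
  have hμneg : μ < 0 := lt_of_le_of_lt (hmin _ (hmemC j₀ hj₀)) hneg
  set S : Fin n → ℝ := fun k => ∑ l, M l k with hS
  have hSi : 0 < S i := (colNZ_iff M hM i).1 hi
  have hgi : g (fun l => M l i) = S i * μ := by
    rw [col_eq_smul M hM i hi, map_smul, ← hei]; rfl
  have hgk : ∀ k, S k * μ ≤ g (fun l => M l k) := by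
    intro k
    by_cases hk : colNZ M k
    · rw [col_eq_smul M hM k hk, map_smul]
      exact mul_le_mul_of_nonneg_left (hmin _ (hmemC k hk)) ((colNZ_iff M hM k).1 hk).le
    · have h0 : (fun l => M l k) = 0 := by
        by_contra h0
        exact hk h0
      have : S k = 0 := Finset.sum_eq_zero fun l _ => congrFun h0 l
      rw [h0, this]; simp
  have hMB : (fun l => (M * B) l i) = ∑ k, B k i • (fun l => M l k) := by
    funext l
    simp [Matrix.mul_apply, Finset.sum_apply, mul_comm]
  have hPi : g (fun l => (M * (1 - β • B) : Matrix (Fin m) (Fin n) ℝ) l i)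
      = g (fun l => M l i) - β * ∑ k, B k i * g (fun l => M l k) := by
    have : (fun l => (M * (1 - β • B) : Matrix (Fin m) (Fin n) ℝ) l i)
        = (fun l => M l i) - β • (fun l => (M * B) l i) := by
      rw [P_apply]; rfl
    rw [this, map_sub, map_smul, hMB, map_sum]
    simp
  have hsumMB : ∑ l, (M * B) l i = ∑ k, B k i * S k := by
    simp only [Matrix.mul_apply, hS, Finset.mul_sum]
    rw [Finset.sum_comm]
    exact Finset.sum_congr rfl fun k _ => Finset.sum_congr rfl fun l _ => mul_comm _ _
  have hle : ∑ l, (M * B) l i ≤ S i := Finset.sum_le_sum fun l _ => hB.2.2 l i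
  have hge : (∑ l, (M * B) l i) * μ ≤ ∑ k, B k i * g (fun l => M l k) := by
    rw [hsumMB, Finset.sum_mul]
    refine Finset.sum_le_sum fun k _ => ?_
    rw [mul_assoc]
    exact mul_le_mul_of_nonneg_left (hgk k) (hB.1 k i)
  have hP0 := hg i
  rw [hPi, hgi] at hP0
  set Q := ∑ l, (M * B) l i with hQ
  have hQ0 : 0 ≤ Q := Finset.sum_nonneg fun l _ => by
    rw [Matrix.mul_apply]
    exact Finset.sum_nonneg fun k _ => mul_nonneg (hM l k) (hB.1 k i)
  have hQS : Q = S i := by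
    have h3 := mul_le_mul_of_nonneg_left hge hb
    have h4 : 0 ≤ (S i - β * Q) * μ := by nlinarith
    have h5 : S i - β * Q ≤ 0 := by
      by_contra h6
      push Not at h6
      nlinarith [mul_neg_of_pos_of_neg h6 hμneg]
    nlinarith
  have hcol : (fun l => M l i) = M *ᵥ (fun k => B k i) := by
    have h3 := (Finset.sum_eq_sum_iff_of_le (fun l _ => hB.2.2 l i)).1 hQS
    funext l
    exact (h3 l (Finset.mem_univ l)).symm
  have hconv : Convex ℝ (C \ {e}) :=
    ((convex_convexHull ℝ _).mem_extremePoints_iff_convex_sdiff.1 heC).2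
  have hbad := normalize_mem M hM (fun l => M l i) hSi (fun k => B k i) (fun k => hB.1 k i) hcol
    (C \ {e}) hconv (by
      intro k hk hkc
      refine ⟨hmemC k hkc, fun hke => hk ?_⟩
      have : k = i := huniq k ⟨hkc, (Set.mem_singleton_iff.1 hke).symm⟩
      rw [this]
      exact hB.2.1 i)
  rw [← normCol_eq M hM, ← hei] at hbad
  exact hbad.2 rfl

theorem key_sub {m n : ℕ} (M : Matrix (Fin m) (Fin n) ℝ) (hM : ∀ i j, 0 ≤ M i j)
    (hvert : NonRepeatedVertices M) (B : Matrix (Fin n) (Fin n) ℝ) (hB : TigrelFeasible M B)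
    (β : ℝ) (hb : 0 ≤ β) (h1 : β ≤ 1) :
    thetaCols M ⊆ convexHull ℝ (thetaCols (M * (1 - β • B))) := by
  rintro x ⟨j, hj, rfl⟩
  by_contra hx
  have hP := P_nonneg M hM B hB β hb h1
  set P := M * (1 - β • B) with hPdef
  obtain ⟨f, u, hf1, hf2⟩ := geometric_hahn_banach_point_closed (convex_convexHull ℝ _)
    ((thetaCols_finite P).isCompact_convexHull (𝕜 := ℝ)).isClosed hx
  let σ : (Fin m → ℝ) →L[ℝ] ℝ := ∑ i, ContinuousLinearMap.proj i
  have hσ : ∀ y, σ y = ∑ i, y i := by intro y; simp [σ]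
  have h0 := key_fun M hM hvert B hB β hb h1 (f - u • σ) (by
    intro k
    change 0 ≤ (f - u • σ) (fun i => P i k)
    by_cases hk : colNZ P k
    · rw [col_eq_smul P hP k hk, map_smul]
      refine mul_nonneg ((colNZ_iff P hP k).1 hk).le ?_
      have h3 := hf2 _ (subset_convexHull ℝ _ ⟨k, hk, rfl⟩)
      have h4 := (normCol_mem_simplex P hP k hk).2
      simp only [_root_.sub_apply, _root_.smul_apply, hσ, h4,
        smul_eq_mul]
      linarith
    · have : (fun l => P l k) = 0 := by
        by_contra h0
        exact hk h0
      rw [this]; simp) j hj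
  have h4 := (normCol_mem_simplex M hM j hj).2
  simp only [_root_.sub_apply, _root_.smul_apply, hσ, h4,
        smul_eq_mul] at h0
  linarith

/-- for `0 ≤ α ≤ β ≤ 1`,
`conv(θ(M)) ⊆ conv(θ(P^α(M))) ⊆ conv(θ(P^β(M))) ⊆ Δ^m ∩ col(θ(M))`, hence
`rank₊(M) ≤ rank₊(P^α(M)) ≤ rank₊(P^β(M))`. -/
theorem stmt17 {m n : ℕ} (M : Matrix (Fin m) (Fin n) ℝ) (hM : ∀ i j, 0 ≤ M i j)
    (hvert : NonRepeatedVertices M)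
    (α β : ℝ) (h0 : 0 ≤ α) (hαβ : α ≤ β) (h1 : β ≤ 1)
    (B : Matrix (Fin n) (Fin n) ℝ) (hB : TigrelOpt M B) :
    convexHull ℝ (thetaCols M) ⊆ convexHull ℝ (thetaCols (M * (1 - α • B))) ∧
    convexHull ℝ (thetaCols (M * (1 - α • B))) ⊆
      convexHull ℝ (thetaCols (M * (1 - β • B))) ∧
    convexHull ℝ (thetaCols (M * (1 - β • B))) ⊆
      stdSimplex ℝ (Fin m) ∩ (Submodule.span ℝ (thetaCols M) : Set (Fin m → ℝ)) ∧
    nnRank M ≤ nnRank (M * (1 - α • B)) ∧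
    nnRank (M * (1 - α • B)) ≤ nnRank (M * (1 - β • B)) := by
  have hF := hB.1
  have hb : 0 ≤ β := h0.trans hαβ
  have ha1 : α ≤ 1 := hαβ.trans h1
  have hPa := P_nonneg M hM B hF α h0 ha1
  have hPb := P_nonneg M hM B hF β hb h1
  obtain ⟨Wa, hWa, hMa⟩ := hull_dom M _ hM hPa (key_sub M hM hvert B hF α h0 ha1)
  obtain ⟨Wb, hWb, hMb⟩ := hull_dom M _ hM hPb (key_sub M hM hvert B hF β hb h1)
  have hab : ∃ W : Matrix (Fin n) (Fin n) ℝ, (∀ i j, 0 ≤ W i j) ∧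
      M * (1 - α • B) = (M * (1 - β • B)) * W := by
    rcases hb.eq_or_lt with hb0 | hbpos
    · have : α = β := le_antisymm hαβ (hb0 ▸ h0)
      refine ⟨1, ?_, by rw [this, Matrix.mul_one]⟩
      intro i j
      rw [Matrix.one_apply]
      split_ifs <;> norm_num
    · refine ⟨(α / β) • 1 + (1 - α / β) • Wb, ?_, ?_⟩
      · intro i j
        have h3 : 0 ≤ α / β := div_nonneg h0 hb
        have h4 : 0 ≤ 1 - α / β := sub_nonneg.2 ((div_le_one hbpos).2 hαβ)
        refine add_nonneg (mul_nonneg h3 ?_) (mul_nonneg h4 (hWb i j))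
        rw [Matrix.one_apply]
        split_ifs <;> norm_num
      · rw [Matrix.mul_add, Matrix.mul_smul, Matrix.mul_smul, ← hMb, Matrix.mul_one, P_apply,
          P_apply]
        ext i j
        simp only [Matrix.sub_apply, Matrix.add_apply, Matrix.smul_apply, smul_eq_mul]
        field_simp
        ring
  obtain ⟨W, hW, hWe⟩ := hab
  refine ⟨dom_hull _ _ hM hPa Wa hWa hMa, dom_hull _ _ hPa hPb W hW hWe, ?_,
    dom_rank _ _ hPa Wa hWa hMa, dom_rank _ _ hPb W hW hWe⟩
  refine convexHull_min ?_ ((convex_stdSimplex ℝ _).inter (Submodule.convex _))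
  rintro x ⟨j, hj, rfl⟩
  refine ⟨normCol_mem_simplex _ hPb j hj, ?_⟩
  have hspan : ∀ k, (fun i => M i k) ∈ Submodule.span ℝ (thetaCols M) := by
    intro k
    by_cases hk : colNZ M k
    · rw [col_eq_smul M hM k hk]
      exact Submodule.smul_mem _ _ (Submodule.subset_span ⟨k, hk, rfl⟩)
    · have : (fun l => M l k) = 0 := by
        by_contra h0
        exact hk h0
      rw [this]; exact Submodule.zero_mem _
  have hc : (fun i => (M * (1 - β • B) : Matrix (Fin m) (Fin n) ℝ) i j) = ∑ k, (1 - β • B) k j • (fun i => M i k) := by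
    funext l
    rw [Finset.sum_apply, Matrix.mul_apply]
    exact Finset.sum_congr rfl fun k _ => mul_comm _ _
  rw [normCol_eq _ hPb, hc]
  exact Submodule.smul_mem _ _ (Submodule.sum_mem _ fun k _ => Submodule.smul_mem _ _ (hspan k))
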